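/- Let θ ∈ (0, 1), let X₀ ∈ ℝ^{n×p} have i.i.d. BG(θ) entries, and fix any w ∈ Γ with w ≠ 0. Then for every t > 0, P[ | wᵀ∇g(w; X₀)/‖w‖ − E[wᵀ∇g(w; X₀)/‖w‖] | ≥ t ] ≤ 2 exp( −p t² / (8n + 4√n · t) ). -/

import Mathlib

open MeasureTheory ProbabilityTheory Real Matrix
open scoped RealInnerProductSpace ENNReal NNReal

noncomputable section

/-- The Bernoulli–Gaussian law `BG(θ)`: with probability `θ` a standard Gaussian,
with probability `1-θ` a point mass at `0`. -/
def bg (θ : ℝ) : Measure ℝ :=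
  θ.toNNReal • gaussianReal 0 1 + (1 - θ).toNNReal • Measure.dirac 0

instance bg.instIsFiniteMeasure (θ : ℝ) : IsFiniteMeasure (bg θ) := by
  unfold bg; infer_instance

/-- Law of an `n × p` matrix with i.i.d. `BG(θ)` entries. -/
def bgMatrix (θ : ℝ) (n p : ℕ) : Measure (Fin n → Fin p → ℝ) :=
  Measure.pi fun _ => Measure.pi fun _ => bg θ

/-- Law of a vector in `ℝ^n` with i.i.d. `BG(θ)` entries. -/
def bgVec (θ : ℝ) (n : ℕ) : Measure (Fin n → ℝ) :=
  Measure.pi fun _ => bg θ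

/-- The smooth sparsity surrogate `h_μ(z) = μ log cosh (z/μ)`. -/
def hmu (μ z : ℝ) : ℝ := μ * Real.log (Real.cosh (z / μ))

/-- Reparametrization `q(w) = (w, √(1-‖w‖²))` with `w` in the unit ball of `ℝ^{n-1}`. -/
def qmap (n : ℕ) (w : EuclideanSpace ℝ (Fin (n - 1))) : Fin n → ℝ :=
  fun i => if h : (i : ℕ) < n - 1 then w ⟨i, h⟩ else Real.sqrt (1 - ‖w‖ ^ 2)

/-- `f(q; Y) = (1/p) ∑ₖ h_μ(qᵀ yₖ)`. -/
def ffun (n p : ℕ) (μ : ℝ) (Y : Matrix (Fin n) (Fin p) ℝ)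
    (q : EuclideanSpace ℝ (Fin n)) : ℝ :=
  (p : ℝ)⁻¹ * ∑ k : Fin p, hmu μ (∑ i : Fin n, q i * Y i k)

/-- `g(w; Y) = f(q(w); Y)`. -/
def gfun (n p : ℕ) (μ : ℝ) (Y : Matrix (Fin n) (Fin p) ℝ)
    (w : EuclideanSpace ℝ (Fin (n - 1))) : ℝ :=
  (p : ℝ)⁻¹ * ∑ k : Fin p, hmu μ (∑ i : Fin n, qmap n w i * Y i k)

/-- Gradient `∇g(w; Y)` in `w`. -/
def gradg (n p : ℕ) (μ : ℝ) (Y : Matrix (Fin n) (Fin p) ℝ)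
    (w : EuclideanSpace ℝ (Fin (n - 1))) : EuclideanSpace ℝ (Fin (n - 1)) :=
  gradient (gfun n p μ Y) w

/-- Hessian `∇²g(w; Y)` in `w`, as a continuous linear map. -/
def hessg (n p : ℕ) (μ : ℝ) (Y : Matrix (Fin n) (Fin p) ℝ)
    (w : EuclideanSpace ℝ (Fin (n - 1))) :
    EuclideanSpace ℝ (Fin (n - 1)) →L[ℝ] EuclideanSpace ℝ (Fin (n - 1)) :=
  fderiv ℝ (gradg n p μ Y) w

/-- The set `Γ = {w : ‖w‖ < √((4n-1)/(4n))}`. -/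
def GammaSet (n : ℕ) : Set (EuclideanSpace ℝ (Fin (n - 1))) :=
  {w | ‖w‖ < Real.sqrt ((4 * (n : ℝ) - 1) / (4 * n))}

/-- Spectral (`ℓ²→ℓ²` operator) norm of а matrix. -/
def specNorm {m k : ℕ} (M : Matrix (Fin m) (Fin k) ℝ) : ℝ :=
  ‖LinearMap.toContinuousLinearMap (Matrix.toEuclideanLin M)‖

/-- Largest magnitude of an entry of a matrix. -/
def Minf {m k : ℕ} (M : Matrix (Fin m) (Fin k) ℝ) : ℝ := ⨆ i, ⨆ j, |M i j|

/-- Condition number: ratio of largest to smallest singular value. -/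
def kappa {n : ℕ} (s : Fin n → ℝ) : ℝ := (⨆ i, s i) / (⨅ i, s i)

/-- Signed standard basis vectors `{± e_i}` of `ℝ^n`. -/
def SignedBasis (n : ℕ) : Set (EuclideanSpace ℝ (Fin n)) :=
  {b | ∃ i : Fin n, b = EuclideanSpace.single i (1 : ℝ) ∨ b = -EuclideanSpace.single i (1 : ℝ)}

/-- Set of local minimizers of `f(·; Y)` over the unit sphere `S^{n-1}`. -/
def LocalMins (n p : ℕ) (μ : ℝ) (Y : Matrix (Fin n) (Fin p) ℝ) :
    Set (EuclideanSpace ℝ (Fin n)) :=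
  {q | q ∈ Metric.sphere (0 : EuclideanSpace ℝ (Fin n)) 1 ∧
       IsLocalMinOn (ffun n p μ Y) (Metric.sphere (0 : EuclideanSpace ℝ (Fin n)) 1) q}

/-- Expected objective `E_x[h_μ(q(w)ᵀ x)]` for `x` with i.i.d. `BG(θ)` entries. -/
def Gexp (n : ℕ) (θ μ : ℝ) (w : EuclideanSpace ℝ (Fin (n - 1))) : ℝ :=
  ∫ x, hmu μ (∑ i : Fin n, qmap n w i * x i) ∂(bgVec θ n)

lemma sinh_mul_sub_le {a y : ℝ} (ha0 : 0 ≤ a) (ha1 : a ≤ 1) (hy : 0 ≤ y) :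
    sinh (a * y) - a * y ≤ a ^ 3 * (sinh y - y) := by
  have h1 := (hasSum_nat_add_iff' 1).2 (Real.hasSum_sinh (a * y))
  have h2 := ((hasSum_nat_add_iff' 1).2 (Real.hasSum_sinh y)).mul_left (a ^ 3)
  simp only [Finset.sum_range_one, mul_zero, zero_add, pow_one, Nat.factorial_one, Nat.cast_one,
    div_one] at h1 h2
  refine hasSum_le (fun k => ?_) h1 h2
  rw [mul_pow, mul_div_assoc]
  exact mul_le_mul_of_nonneg_right (pow_le_pow_of_le_one ha0 ha1 (by lia)) (by positivity)

lemma sinh_sub_self_le {y : ℝ} (hy : 0 ≤ y) :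
    sinh y - y ≤ 31 / 400 * (cosh (2 * y) - 1) := by
  let F : ℝ → ℝ := fun y => 31 / 200 * sinh y ^ 2 - (sinh y - y)
  have hF : ∀ y, HasDerivAt F (31 / 100 * sinh y * cosh y - (cosh y - 1)) y := fun y => by
    have := (((hasDerivAt_sinh y).pow 2).const_mul (31 / 200)).sub
      ((hasDerivAt_sinh y).sub (hasDerivAt_id y))
    exact this.congr_deriv (by norm_num; ring)
  have hmono : MonotoneOn F (Set.Ici 0) := by
    refine monotoneOn_of_deriv_nonneg (convex_Ici 0)
      (fun y _ => (hF y).continuousAt.continuousWithinAt)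
      (fun y _ => (hF y).differentiableAt.differentiableWithinAt) fun y hy => ?_
    rw [interior_Ici, Set.mem_Ioi] at hy
    rw [(hF y).deriv, sub_nonneg]
    have hS : 0 < sinh y := sinh_pos_iff.2 hy
    have hC : 1 ≤ cosh y := one_le_cosh y
    have hsq : sinh y ^ 2 = cosh y ^ 2 - 1 := sinh_sq y
    refine abs_le_of_sq_le_sq' ?_ (by positivity) |>.2
    have : (31 / 100 * sinh y * cosh y) ^ 2 - (cosh y - 1) ^ 2
        = (cosh y - 1) * ((31 / 100) ^ 2 * (cosh y + 1) * cosh y ^ 2 - (cosh y - 1)) := by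
      rw [mul_pow, mul_pow, hsq]; ring
    have h2 : 0 ≤ (31 / 100) ^ 2 * (cosh y + 1) * cosh y ^ 2 - (cosh y - 1) := by
      nlinarith [mul_nonneg (by linarith : 0 ≤ cosh y) (sq_nonneg (cosh y - 9 / 5)),
        sq_nonneg (cosh y - 9 / 5), sq_nonneg (cosh y - 2)]
    nlinarith [mul_nonneg (sub_nonneg.2 hC) h2]
  have := hmono (Set.mem_Ici.2 le_rfl) (Set.mem_Ici.2 hy) hy
  simp only [F, sinh_zero] at this
  rw [cosh_two_mul, cosh_sq]
  linarith

lemma exp_sub_one_sub_le_of_abs_le {x y : ℝ} (h : |x| ≤ y) :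
    exp x - 1 - x ≤ exp y - 1 - y := by
  have hmono : MonotoneOn (fun y : ℝ => exp y - y) (Set.Ici 0) := by
    refine monotoneOn_of_deriv_nonneg (convex_Ici 0) (by fun_prop) (by fun_prop) fun y hy => ?_
    rw [interior_Ici, Set.mem_Ioi] at hy
    have := ((hasDerivAt_exp y).sub (hasDerivAt_id y)).deriv
    have h' : deriv (fun y : ℝ => exp y - y) y = exp y - 1 := this
    rw [h', sub_nonneg]
    exact one_le_exp hy.le
  have h1 := hmono (Set.mem_Ici.2 (abs_nonneg x)) (Set.mem_Ici.2 ((abs_nonneg x).trans h)) h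
  have h2 : exp x - x ≤ exp |x| - |x| := by
    rcases le_total 0 x with hx | hx
    · rw [abs_of_nonneg hx]
    · rw [abs_of_nonpos hx]
      have := self_le_sinh_iff.2 (neg_nonneg.2 hx)
      rw [sinh_eq, neg_neg] at this
      linarith
  simp only at h1
  linarith

lemma exp_mul_le_add_cosh {a y z : ℝ} (ha : |a| ≤ 1) (h : |z| ≤ |y|) :
    exp (a * z) ≤ 1 + a * z + (cosh (a * y) - 1) + |a| ^ 3 * (31 / 400 * (cosh (2 * y) - 1)) := by
  have h1 := exp_sub_one_sub_le_of_abs_le (x := a * z) (y := |a| * |y|) (by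
    rw [abs_mul]; gcongr)
  have h2 := sinh_mul_sub_le (abs_nonneg a) ha (abs_nonneg y)
  have h3 := mul_le_mul_of_nonneg_left (sinh_sub_self_le (abs_nonneg y))
    (pow_nonneg (abs_nonneg a) 3)
  have h4 : cosh (2 * |y|) = cosh (2 * y) := by
    rw [← cosh_abs (2 * y), abs_mul, abs_two]
  have h5 : cosh (|a| * |y|) = cosh (a * y) := by rw [← abs_mul, cosh_abs]
  rw [h4] at h3
  rw [← cosh_add_sinh (|a| * |y|), h5] at h1
  linarith

lemma exp_half_sq_sub_one_add_le {a : ℝ} (ha0 : 0 ≤ a) (ha1 : a < 1) :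
    exp (a ^ 2 / 2) - 1 + a ^ 3 * (31 / 400 * (exp 2 - 1)) ≤ a ^ 2 / (2 * (1 - a)) := by
  have h1 : exp (a ^ 2 / 2) ≤ 1 + a ^ 2 / 2 + (a ^ 2 / 2) ^ 2 := by
    have := abs_exp_sub_one_sub_id_le (x := a ^ 2 / 2) (by
      rw [abs_of_nonneg (by positivity)]; nlinarith)
    linarith [le_abs_self (exp (a ^ 2 / 2) - 1 - a ^ 2 / 2)]
  have h2 : exp 2 ≤ 7.4 := by
    have : exp 2 = exp 1 ^ 2 := by rw [← exp_nat_mul]; norm_num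
    rw [this]
    nlinarith [exp_one_lt_d9, exp_pos 1]
  have h3 : a ^ 3 * (31 / 400 * (exp 2 - 1)) ≤ a ^ 3 * (1 / 2) := by
    gcongr; linarith
  have h4 : a ^ 2 / 2 * (1 + a + a ^ 2) ≤ a ^ 2 / (2 * (1 - a)) := by
    rw [le_div_iff₀ (by linarith)]
    nlinarith [pow_nonneg ha0 5]
  nlinarith [pow_nonneg ha0 4]

lemma measurePreserving_pi_pi_swap {ι κ α : Type*} [Fintype ι] [Fintype κ] [MeasurableSpace α]
    (ν : Measure α) [IsProbabilityMeasure ν] :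
    MeasurePreserving (fun (X : ι → κ → α) k i => X i k)
      (Measure.pi fun _ => Measure.pi fun _ => ν) (Measure.pi fun _ => Measure.pi fun _ => ν) := by
  refine ⟨by fun_prop, ?_⟩
  rw [← (MeasurableEquiv.curry κ ι α).symm.map_measurableEquiv_injective.eq_iff]
  have h := Measure.infinitePi_map_curry_symm (ι := κ) (κ := ι) fun _ _ => ν
  simp only [Measure.infinitePi_eq_pi] at h
  rw [h, Measure.map_map (by fun_prop) (by fun_prop)]
  refine (Measure.pi_eq fun s hs => ?_).symm
  rw [Measure.map_apply (by fun_prop) (.univ_pi hs)]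
  have : (MeasurableEquiv.curry κ ι α).symm ∘ (fun (X : ι → κ → α) k i => X i k) ⁻¹'
      Set.univ.pi s = Set.univ.pi fun i => Set.univ.pi fun k => s (k, i) := by
    ext X
    simp only [MeasurableEquiv.coe_curry_symm, Set.mem_preimage, Set.mem_pi, Set.mem_univ,
      forall_const, Prod.forall, Function.comp_apply, Function.uncurry_apply_pair]
    exact forall_comm
  rw [this]
  simp only [Measure.pi_pi]
  rw [Finset.prod_comm, Fintype.prod_prod_type]

section Mgf

variable {Ω : Type*} [MeasurableSpace Ω] {P : Measure Ω}

lemma ProbabilityTheory.HasSubgaussianMGF.integrable_exp_mul_of_abs_le {Y Z : Ω → ℝ} {c : ℝ≥0}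
    (hY : HasSubgaussianMGF Y c P) (hZ : AEMeasurable Z P) (hZY : ∀ ω, |Z ω| ≤ |Y ω|) (l : ℝ) :
    Integrable (fun ω => exp (l * Z ω)) P := by
  refine ((hY.integrable_exp_mul l).add (hY.integrable_exp_mul (-l))).mono'
    (by fun_prop) (.of_forall fun ω => ?_)
  rw [norm_of_nonneg (exp_nonneg _), Pi.add_apply]
  calc exp (l * Z ω) ≤ exp |l * Y ω| := by
        gcongr
        refine (le_abs_self _).trans ?_
        rw [abs_mul, abs_mul]
        exact mul_le_mul_of_nonneg_left (hZY ω) (abs_nonneg l)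
    _ ≤ exp (l * Y ω) + exp (-l * Y ω) := by
        rw [neg_mul]; exact exp_abs_le _

lemma ProbabilityTheory.HasSubgaussianMGF.integral_cosh_mul_le {Y : Ω → ℝ} {c : ℝ≥0}
    (hY : HasSubgaussianMGF Y c P) (s : ℝ) :
    Integrable (fun ω => cosh (s * Y ω)) P ∧ ∫ ω, cosh (s * Y ω) ∂P ≤ exp (c * s ^ 2 / 2) := by
  have h1 := hY.integrable_exp_mul s
  have h2 := hY.integrable_exp_mul (-s)
  have heq : (fun ω => cosh (s * Y ω)) =
      fun ω => (exp (s * Y ω) + exp (-s * Y ω)) / 2 := by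
    ext ω; rw [cosh_eq, neg_mul]
  rw [heq]
  refine ⟨(h1.add h2).div_const 2, ?_⟩
  rw [integral_div, integral_add h1 h2]
  have h3 := hY.mgf_le s
  have h4 := hY.mgf_le (-s)
  rw [neg_sq] at h4
  simp only [mgf] at h3 h4
  linarith

/-- A random variable dominated by a sub-Gaussian one satisfies Bernstein's moment generating
function bound, with scale `R` at least the sub-Gaussian parameter. -/
lemma mgf_sub_integral_le_of_abs_le [IsProbabilityMeasure P] {Y Z : Ω → ℝ} {c : ℝ≥0} {R l : ℝ}
    (hY : HasSubgaussianMGF Y c P) (hZ : AEMeasurable Z P) (hZY : ∀ ω, |Z ω| ≤ |Y ω|)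
    (hR : 0 < R) (hc : c ≤ R ^ 2) (hl : |l| * R < 1) :
    mgf (fun ω => Z ω - ∫ ω, Z ω ∂P) P l ≤ exp ((|l| * R) ^ 2 / (2 * (1 - |l| * R))) := by
  have hZint : Integrable Z P :=
    hY.integrable.mono hZ.aestronglyMeasurable (.of_forall hZY)
  obtain ⟨hi1, hb1⟩ := hY.integral_cosh_mul_le l
  obtain ⟨hi2, hb2⟩ := hY.integral_cosh_mul_le (2 / R)
  have habs : |l * R| = |l| * R := by rw [abs_mul, abs_of_pos hR]
  have hpt : ∀ ω, exp (l * Z ω) ≤ 1 + l * Z ω + (cosh (l * Y ω) - 1)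
      + (|l| * R) ^ 3 * (31 / 400 * (cosh (2 / R * Y ω) - 1)) := fun ω => by
    have h := exp_mul_le_add_cosh (a := l * R) (y := Y ω / R) (z := Z ω / R)
      (by rw [habs]; exact hl.le)
      (by rw [abs_div, abs_div]; exact div_le_div_of_nonneg_right (hZY ω) (abs_nonneg R))
    have h1 : ∀ x : ℝ, l * R * (x / R) = l * x := fun x => by field_simp
    have h2 : 2 * (Y ω / R) = 2 / R * Y ω := by ring
    rwa [habs, h1, h1, h2] at h
  have hbound : mgf Z P l ≤ 1 + l * (∫ ω, Z ω ∂P) + (|l| * R) ^ 2 / (2 * (1 - |l| * R)) := by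
    have hi : Integrable (fun ω => 1 + l * Z ω) P :=
      (integrable_const 1).add (hZint.const_mul l)
    have hi' : Integrable (fun ω => 1 + l * Z ω + (cosh (l * Y ω) - 1)) P :=
      hi.add (hi1.sub (integrable_const 1))
    have hi1' : Integrable (fun ω => cosh (l * Y ω) - 1) P := hi1.sub (integrable_const 1)
    have hi2' : Integrable
        (fun ω => (|l| * R) ^ 3 * (31 / 400 * (cosh (2 / R * Y ω) - 1))) P :=
      ((hi2.sub (integrable_const 1)).const_mul _).const_mul _
    have h := integral_mono (hY.integrable_exp_mul_of_abs_le hZ hZY l)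
      (hi'.add hi2') hpt
    have h1 : ∫ ω, cosh (l * Y ω) ∂P ≤ exp ((|l| * R) ^ 2 / 2) := by
      refine hb1.trans (exp_le_exp.2 ?_)
      rw [mul_pow, sq_abs]
      nlinarith [sq_nonneg l]
    have h2 : ∫ ω, cosh (2 / R * Y ω) ∂P ≤ exp 2 := by
      refine hb2.trans (exp_le_exp.2 ?_)
      rw [div_pow, mul_div_assoc', div_div, div_le_iff₀ (by positivity)]
      nlinarith
    have h3 := exp_half_sq_sub_one_add_le (a := |l| * R) (by positivity) hl
    have h4 : (|l| * R) ^ 3 * (31 / 400 * (∫ ω, cosh (2 / R * Y ω) ∂P - 1)) ≤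
        (|l| * R) ^ 3 * (31 / 400 * (exp 2 - 1)) := by gcongr
    simp only [Pi.add_apply] at h
    rw [integral_add hi' hi2', integral_add hi hi1',
      integral_add (integrable_const 1) (hZint.const_mul l), integral_const_mul,
      integral_const_mul, integral_const_mul, integral_sub hi1 (integrable_const 1),
      integral_sub hi2 (integrable_const 1)] at h
    simp only [integral_const, probReal_univ, smul_eq_mul, mul_one] at h
    rw [mgf]
    linarith
  have hsplit : mgf (fun ω => Z ω - ∫ ω, Z ω ∂P) P l =
      mgf Z P l * exp (-(l * ∫ ω, Z ω ∂P)) := by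
    rw [mgf, mgf, ← integral_mul_const]
    congr with ω
    rw [← exp_add]; ring_nf
  rw [hsplit]
  calc _ ≤ exp (l * (∫ ω, Z ω ∂P) + (|l| * R) ^ 2 / (2 * (1 - |l| * R)))
        * exp (-(l * ∫ ω, Z ω ∂P)) := by
        gcongr
        refine hbound.trans ?_
        have := add_one_le_exp (l * (∫ ω, Z ω ∂P) + (|l| * R) ^ 2 / (2 * (1 - |l| * R)))
        linarith
    _ = _ := by rw [← exp_add]; ring_nf

/-- One-sided Bernstein inequality for independent centred random variables. -/
lemma measureReal_sum_ge_le_of_mgf_le [IsFiniteMeasure P] {ι : Type*} [Fintype ι] {W : ι → Ω → ℝ}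
    (hW : iIndepFun W P) (hm : ∀ k, Measurable (W k)) {R t : ℝ} (hR : 0 < R) (ht : 0 < t)
    (hint : ∀ k l, Integrable (fun ω => exp (l * W k ω)) P)
    (hmgf : ∀ k l, 0 ≤ l → l * R < 1 →
      mgf (W k) P l ≤ exp ((l * R) ^ 2 / (2 * (1 - l * R)))) :
    P.real {ω | Fintype.card ι * t ≤ ∑ k, W k ω} ≤
      exp (-(Fintype.card ι * t ^ 2) / (2 * R ^ 2 + 2 * R * t)) := by
  set l : ℝ := t / (R ^ 2 + R * t) with hl
  have hden : 0 < R ^ 2 + R * t := by positivity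
  have hl0 : 0 ≤ l := by positivity
  have hl1 : l * R < 1 := by
    rw [hl, div_mul_eq_mul_div, div_lt_one hden]
    nlinarith
  have h1 := measure_ge_le_exp_mul_mgf (X := ∑ k, W k) (μ := P) (Fintype.card ι * t) hl0
    (hW.integrable_exp_mul_sum hm fun k _ => hint k l)
  rw [hW.mgf_sum hm] at h1
  have h2 : ∏ k, mgf (W k) P l ≤ ∏ _k : ι, exp ((l * R) ^ 2 / (2 * (1 - l * R))) :=
    Finset.prod_le_prod (fun _ _ => mgf_nonneg) fun k _ => hmgf k l hl0 hl1
  rw [Finset.prod_const, Finset.card_univ, ← exp_nat_mul] at h2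
  simp only [Finset.sum_apply] at h1
  refine h1.trans ((mul_le_mul_of_nonneg_left h2 (exp_nonneg _)).trans_eq ?_)
  rw [← exp_add]
  congr 1
  have h3 : 1 - l * R = R ^ 2 / (R ^ 2 + R * t) := by rw [hl]; field_simp; ring
  rw [h3, hl]
  field_simp
  ring

end Mgf

section Bernstein

variable {α : Type*} [MeasurableSpace α] {ν : Measure α} [IsProbabilityMeasure ν]
  {Y Z : α → ℝ} {c : ℝ≥0} {R t : ℝ}

lemma measureReal_pi_sum_ge_le_of_abs_le (p : ℕ) (hY : HasSubgaussianMGF Y c ν)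
    (hZ : Measurable Z) (hZY : ∀ x, |Z x| ≤ |Y x|) (hR : 0 < R) (hc : c ≤ R ^ 2) (ht : 0 < t) :
    (Measure.pi fun _ : Fin p => ν).real {X | p * t ≤ ∑ k, (Z (X k) - ∫ x, Z x ∂ν)} ≤
      exp (-(p * t ^ 2) / (2 * R ^ 2 + 2 * R * t)) := by
  have hW : Measurable fun x => Z x - ∫ x, Z x ∂ν := hZ.sub_const _
  have hpres := fun k : Fin p => measurePreserving_eval (fun _ : Fin p => ν) k
  have hint : ∀ l, Integrable (fun x => exp (l * (Z x - ∫ x, Z x ∂ν))) ν := fun l => by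
    simp only [mul_sub, exp_sub]
    exact (hY.integrable_exp_mul_of_abs_le hZ.aemeasurable hZY l).div_const _
  have h := measureReal_sum_ge_le_of_mgf_le (P := Measure.pi fun _ : Fin p => ν)
    (W := fun k X => Z (X k) - ∫ x, Z x ∂ν)
    (iIndepFun_pi (X := fun _ x => Z x - ∫ x, Z x ∂ν) fun _ => hW.aemeasurable)
    (fun k => hW.comp (measurable_pi_apply k)) hR ht
    (fun k l => (hpres k).integrable_comp_of_integrable (hint l))
    (fun k l hl0 hl1 => by
      have h1 := mgf_sub_integral_le_of_abs_le hY hZ.aemeasurable hZY hR hc (l := l)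
        (by rwa [abs_of_nonneg hl0])
      rw [abs_of_nonneg hl0, ← (hpres k).map_eq, mgf_map (hpres k).measurable.aemeasurable
        (by rw [(hpres k).map_eq]; exact (hint l).aestronglyMeasurable), (hpres k).map_eq] at h1
      exact h1)
  simpa only [Fintype.card_fin] using h

/-- Two-sided Bernstein inequality for i.i.d. variables dominated by a sub-Gaussian one. -/
lemma measure_pi_abs_sum_ge_le_of_abs_le (p : ℕ) (hY : HasSubgaussianMGF Y c ν)
    (hZ : Measurable Z) (hZY : ∀ x, |Z x| ≤ |Y x|) (hR : 0 < R) (hc : c ≤ R ^ 2) (ht : 0 < t) :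
    (Measure.pi fun _ : Fin p => ν) {X | p * t ≤ |∑ k, (Z (X k) - ∫ x, Z x ∂ν)|} ≤
      ENNReal.ofReal (2 * exp (-(p * t ^ 2) / (2 * R ^ 2 + 2 * R * t))) := by
  have h1 := measureReal_pi_sum_ge_le_of_abs_le p hY hZ hZY hR hc ht
  have h2 := measureReal_pi_sum_ge_le_of_abs_le p hY hZ.neg
    (fun x => by rw [Pi.neg_apply, abs_neg]; exact hZY x) hR hc ht
  rw [← ofReal_measureReal]
  refine ENNReal.ofReal_le_ofReal ?_
  have hsub : {X : Fin p → α | p * t ≤ |∑ k, (Z (X k) - ∫ x, Z x ∂ν)|} ⊆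
      {X | p * t ≤ ∑ k, (Z (X k) - ∫ x, Z x ∂ν)} ∪
        {X | p * t ≤ ∑ k, ((-Z) (X k) - ∫ x, (-Z) x ∂ν)} := fun X hX => by
    have hneg : ∑ k, ((-Z) (X k) - ∫ x, (-Z) x ∂ν) = -∑ k, (Z (X k) - ∫ x, Z x ∂ν) := by
      simp only [Pi.neg_apply, integral_neg, ← Finset.sum_neg_distrib]
      exact Finset.sum_congr rfl fun k _ => by ring
    simpa only [Set.mem_union, Set.mem_ofPred_eq, hneg] using le_abs.1 hX
  have h3 := (measureReal_mono (μ := Measure.pi fun _ : Fin p => ν) hsub).trans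
    (measureReal_union_le _ _)
  linarith

end Bernstein

lemma isProbabilityMeasure_bg {θ : ℝ} (hθ : θ ∈ Set.Ioo (0 : ℝ) 1) :
    IsProbabilityMeasure (bg θ) := by
  refine ⟨?_⟩
  simp only [bg, Measure.add_apply, Measure.smul_apply, measure_univ]
  have h : θ.toNNReal + (1 - θ).toNNReal = 1 := by
    rw [← Real.toNNReal_add hθ.1.le (by linarith [hθ.2])]; simp
  simp only [ENNReal.smul_def, smul_eq_mul, mul_one]
  exact_mod_cast h

lemma hasSubgaussianMGF_const_mul_bg {θ : ℝ} (hθ : θ ∈ Set.Ioo (0 : ℝ) 1) (v : ℝ) :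
    HasSubgaussianMGF (fun x => v * x) (v ^ 2).toNNReal (bg θ) := by
  have hG : ∀ s, Integrable (fun x => exp (s * (v * x))) (gaussianReal 0 1) := fun s => by
    simpa only [mul_assoc] using integrable_exp_mul_gaussianReal (μ := 0) (v := 1) (s * v)
  have hD : ∀ s, Integrable (fun x => exp (s * (v * x))) (Measure.dirac 0) := fun s =>
    integrable_dirac (by simp)
  refine ⟨fun s => ((hG s).smul_measure_nnreal).add_measure ((hD s).smul_measure_nnreal),
    fun s => ?_⟩
  have hval : ∫ x, exp (s * (v * x)) ∂(gaussianReal 0 1) = exp (v ^ 2 * s ^ 2 / 2) := by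
    have := mgf_gaussianReal (p := gaussianReal 0 1) (X := id) (μ := 0) (v := 1) (by simp) (s * v)
    simp only [mgf, id, mul_assoc] at this
    rw [this]; congr 1; simp; ring
  rw [mgf, bg, integral_add_measure ((hG s).smul_measure_nnreal) ((hD s).smul_measure_nnreal),
    integral_smul_nnreal_measure, integral_smul_nnreal_measure, hval, integral_dirac]
  simp only [NNReal.smul_def, smul_eq_mul, mul_zero, exp_zero, mul_one,
    Real.coe_toNNReal _ hθ.1.le, Real.coe_toNNReal _ (sub_nonneg.2 hθ.2.le),
    Real.coe_toNNReal _ (sq_nonneg v)]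
  have : 1 ≤ exp (v ^ 2 * s ^ 2 / 2) := one_le_exp (by positivity)
  nlinarith [hθ.2]

lemma hasSubgaussianMGF_linear_bgVec {θ : ℝ} (hθ : θ ∈ Set.Ioo (0 : ℝ) 1) {n : ℕ}
    (v : Fin n → ℝ) :
    HasSubgaussianMGF (fun x => ∑ i, v i * x i) (∑ i, (v i ^ 2).toNNReal) (bgVec θ n) := by
  have := isProbabilityMeasure_bg hθ
  refine HasSubgaussianMGF.sum_of_iIndepFun
    (iIndepFun_pi (μ := fun _ : Fin n => bg θ) (X := fun i x => v i * x) (by fun_prop)) fun i _ => ?_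
  have hmap := (measurePreserving_eval (fun _ : Fin n => bg θ) i).map_eq
  have h := hasSubgaussianMGF_const_mul_bg hθ (v i)
  rw [← hmap] at h
  exact h.of_map (measurable_pi_apply i).aemeasurable

/-- The derivative of `q` at `w` in the direction `w / ‖w‖`. -/
def qdir (n : ℕ) (w : EuclideanSpace ℝ (Fin (n - 1))) : Fin n → ℝ :=
  fun i => (if h : (i : ℕ) < n - 1 then w ⟨i, h⟩ else -‖w‖ ^ 2 / √(1 - ‖w‖ ^ 2)) / ‖w‖

lemma sum_qdir_sq {n : ℕ} {w : EuclideanSpace ℝ (Fin (n - 1))} (hw0 : w ≠ 0) (hw1 : ‖w‖ < 1) :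
    ∑ i, qdir n w i ^ 2 = (1 - ‖w‖ ^ 2)⁻¹ := by
  obtain _ | m := n
  · exact absurd (Subsingleton.elim (α := EuclideanSpace ℝ (Fin 0)) w 0) hw0
  have hpos : 0 < ‖w‖ := norm_pos_iff.2 hw0
  have hq : 0 < 1 - ‖w‖ ^ 2 := by nlinarith
  rw [Fin.sum_univ_castSucc]
  have h1 : ∀ i : Fin m, qdir (m + 1) w i.castSucc = w i / ‖w‖ := fun i => by
    simp [qdir]
  have h2 : qdir (m + 1) w (Fin.last m) = -‖w‖ ^ 2 / √(1 - ‖w‖ ^ 2) / ‖w‖ := by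
    simp [qdir]
  simp only [h1, h2, div_pow, ← Finset.sum_div]
  have h3 : ∑ i : Fin m, w i ^ 2 = ‖w‖ ^ 2 := (EuclideanSpace.real_norm_sq_eq w).symm
  rw [h3, Real.sq_sqrt hq.le]
  field_simp
  ring

lemma hasDerivAt_qmap_line {n : ℕ} {w : EuclideanSpace ℝ (Fin (n - 1))} (hw0 : w ≠ 0)
    (hw1 : ‖w‖ < 1) (i : Fin n) :
    HasDerivAt (fun s : ℝ => qmap n (w + s • w) i) (‖w‖ * qdir n w i) 0 := by
  have hpos : 0 < ‖w‖ := norm_pos_iff.2 hw0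
  have hq : 0 < 1 - ‖w‖ ^ 2 := by nlinarith
  unfold qmap qdir
  rw [mul_div_cancel₀ _ hpos.ne']
  split_ifs with h
  · simpa using ((hasDerivAt_id (0 : ℝ)).mul_const (w ⟨i, h⟩)).const_add (w ⟨i, h⟩)
  · have heq : (fun s : ℝ => √(1 - ‖w + s • w‖ ^ 2)) =
        fun s => √(1 - (1 + s) ^ 2 * ‖w‖ ^ 2) := by
      ext s
      have : w + s • w = (1 + s) • w := by rw [add_smul, one_smul]
      rw [this, norm_smul, mul_pow, norm_eq_abs, sq_abs]
    rw [heq]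
    have h1 : HasDerivAt (fun s : ℝ => 1 - (1 + s) ^ 2 * ‖w‖ ^ 2) (-(2 * ‖w‖ ^ 2)) 0 := by
      have := (((((hasDerivAt_id (0 : ℝ)).const_add 1).pow 2).mul_const (‖w‖ ^ 2)).const_sub 1)
      exact this.congr_deriv (by simp)
    refine (h1.sqrt (by simpa using hq.ne')).congr_deriv ?_
    simp only [add_zero, one_pow, one_mul]
    have := (Real.sqrt_pos.2 hq).ne'
    field_simp

lemma hasDerivAt_hmu {μ : ℝ} (hμ : 0 < μ) (z : ℝ) : HasDerivAt (hmu μ) (tanh (z / μ)) z := by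
  have h := ((((hasDerivAt_id z).div_const μ).cosh).log (cosh_pos _).ne').const_mul μ
  refine h.congr_deriv ?_
  rw [tanh_eq_sinh_div_cosh]
  simp only [id]
  field_simp

lemma differentiableAt_gfun {n p : ℕ} {μ : ℝ} (hμ : 0 < μ) (Y : Matrix (Fin n) (Fin p) ℝ)
    {w : EuclideanSpace ℝ (Fin (n - 1))} (hw1 : ‖w‖ < 1) :
    DifferentiableAt ℝ (gfun n p μ Y) w := by
  have hq : 0 < 1 - ‖w‖ ^ 2 := by nlinarith [norm_nonneg w]
  have hqmap : ∀ i, DifferentiableAt ℝ (fun w => qmap n w i) w := fun i => by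
    unfold qmap
    split_ifs with h
    · fun_prop
    · exact ((differentiableAt_const 1).sub (differentiableAt_id.norm_sq ℝ)).sqrt hq.ne'
  refine DifferentiableAt.const_mul (DifferentiableAt.fun_sum fun k _ => ?_) _
  exact (hasDerivAt_hmu hμ _).differentiableAt.comp w
    (DifferentiableAt.fun_sum fun i _ => (hqmap i).mul_const (Y i k))

/-- The contribution of one data column `x` to the directional derivative of `g`. -/
def colDeriv (n : ℕ) (μ : ℝ) (w : EuclideanSpace ℝ (Fin (n - 1))) (x : Fin n → ℝ) : ℝ :=
  tanh ((∑ i, qmap n w i * x i) / μ) * ∑ i, qdir n w i * x i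

lemma inner_gradg_div_norm {n p : ℕ} {μ : ℝ} (hμ : 0 < μ) (Y : Matrix (Fin n) (Fin p) ℝ)
    {w : EuclideanSpace ℝ (Fin (n - 1))} (hw0 : w ≠ 0) (hw1 : ‖w‖ < 1) :
    ⟪w, gradg n p μ Y w⟫ / ‖w‖ = (p : ℝ)⁻¹ * ∑ k, colDeriv n μ w fun i => Y i k := by
  have hpos : ‖w‖ ≠ 0 := norm_ne_zero_iff.2 hw0
  have hinner : ⟪w, gradg n p μ Y w⟫ = fderiv ℝ (gfun n p μ Y) w w := by
    rw [real_inner_comm, gradg, gradient, InnerProductSpace.toDual_symm_apply]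
  have h1 := (differentiableAt_gfun hμ Y hw1).hasFDerivAt.hasLineDerivAt w
  have h2 : HasDerivAt (fun s : ℝ => gfun n p μ Y (w + s • w))
      ((p : ℝ)⁻¹ * ∑ k, tanh ((∑ i, qmap n w i * Y i k) / μ) *
        ∑ i, ‖w‖ * qdir n w i * Y i k) 0 := by
    refine HasDerivAt.const_mul _ (HasDerivAt.fun_sum fun k _ => ?_)
    have h3 : HasDerivAt (fun s : ℝ => ∑ i, qmap n (w + s • w) i * Y i k)
        (∑ i, ‖w‖ * qdir n w i * Y i k) 0 :=
      HasDerivAt.fun_sum fun i _ => (hasDerivAt_qmap_line hw0 hw1 i).mul_const _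
    have h4 := (hasDerivAt_hmu hμ (∑ i, qmap n (w + (0 : ℝ) • w) i * Y i k)).comp 0 h3
    simp only [zero_smul, add_zero] at h4
    exact h4
  rw [hinner, HasDerivAt.unique h1 h2, mul_div_assoc, Finset.sum_div]
  congr 1
  refine Finset.sum_congr rfl fun k _ => ?_
  simp only [colDeriv, mul_assoc, ← Finset.mul_sum]
  field_simp

lemma measurable_colDeriv (n : ℕ) (μ : ℝ) (w : EuclideanSpace ℝ (Fin (n - 1))) :
    Measurable (colDeriv n μ w) := by
  unfold colDeriv
  simp only [tanh_eq_sinh_div_cosh]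
  fun_prop

lemma abs_colDeriv_le (n : ℕ) (μ : ℝ) (w : EuclideanSpace ℝ (Fin (n - 1))) (x : Fin n → ℝ) :
    |colDeriv n μ w x| ≤ |∑ i, qdir n w i * x i| := by
  rw [colDeriv, abs_mul]
  exact mul_le_of_le_one_left (abs_nonneg _) (abs_tanh_lt_one _).le

lemma one_div_le_one_sub_norm_sq {n : ℕ} {w : EuclideanSpace ℝ (Fin (n - 1))}
    (hw : w ∈ GammaSet n) (hw0 : w ≠ 0) : 0 < (n : ℝ) ∧ 1 / (4 * n : ℝ) ≤ 1 - ‖w‖ ^ 2 := by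
  obtain _ | m := n
  · exact absurd (Subsingleton.elim (α := EuclideanSpace ℝ (Fin 0)) w 0) hw0
  have hn : (0 : ℝ) < ((m + 1 : ℕ) : ℝ) := by positivity
  refine ⟨hn, ?_⟩
  have h := (Real.lt_sqrt (norm_nonneg w)).1 hw
  have : (4 * ((m + 1 : ℕ) : ℝ) - 1) / (4 * (m + 1 : ℕ)) = 1 - 1 / (4 * (m + 1 : ℕ)) := by
    field_simp
  linarith

/-- Proposition: pointwise concentration of the directional gradient. -/
theorem statement7 (n p : ℕ) (θ μ : ℝ) (hθ : θ ∈ Set.Ioo (0 : ℝ) 1) (hμ : 0 < μ)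
    (w : EuclideanSpace ℝ (Fin (n - 1))) (hw : w ∈ GammaSet n) (hw0 : w ≠ 0)
    (t : ℝ) (ht : 0 < t) :
    bgMatrix θ n p
        {X | t ≤ |⟪w, gradg n p μ (Matrix.of X) w⟫ / ‖w‖ -
                  ∫ X', ⟪w, gradg n p μ (Matrix.of X') w⟫ / ‖w‖ ∂bgMatrix θ n p|} ≤
      ENNReal.ofReal
        (2 * Real.exp (-((p : ℝ) * t ^ 2) / (8 * n + 4 * Real.sqrt n * t))) := by
  have hbg := isProbabilityMeasure_bg hθ
  have hprob : IsProbabilityMeasure (bgVec θ n) := by unfold bgVec; infer_instance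
  have hprobM : IsProbabilityMeasure (bgMatrix θ n p) := by unfold bgMatrix; infer_instance
  rcases Nat.eq_zero_or_pos p with rfl | hp
  · refine prob_le_one.trans ?_
    simp
  obtain ⟨hn, hq⟩ := one_div_le_one_sub_norm_sq hw hw0
  have hq0 : 0 < 1 - ‖w‖ ^ 2 := lt_of_lt_of_le (by positivity) hq
  have hw1 : ‖w‖ < 1 := by nlinarith [norm_nonneg w]
  have hp' : (0 : ℝ) < p := by exact_mod_cast hp
  have hY := hasSubgaussianMGF_linear_bgVec hθ (qdir n w)
  have hZY := abs_colDeriv_le n μ w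
  have hZ := measurable_colDeriv n μ w
  have hZint : Integrable (colDeriv n μ w) (bgVec θ n) :=
    hY.integrable.mono hZ.aestronglyMeasurable (.of_forall hZY)
  have hswap := measurePreserving_pi_pi_swap (ι := Fin n) (κ := Fin p) (bg θ)
  have hcol : ∀ k : Fin p, MeasurePreserving (fun (X : Fin n → Fin p → ℝ) i => X i k)
      (bgMatrix θ n p) (bgVec θ n) := fun k =>
    (measurePreserving_eval (fun _ : Fin p => bgVec θ n) k).comp hswap
  have hmean : ∫ X', ⟪w, gradg n p μ (Matrix.of X') w⟫ / ‖w‖ ∂bgMatrix θ n p =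
      ∫ x, colDeriv n μ w x ∂bgVec θ n := by
    simp only [inner_gradg_div_norm hμ _ hw0 hw1, Matrix.of_apply]
    have hcolint : ∀ k : Fin p, Integrable (fun X : Fin n → Fin p → ℝ =>
        colDeriv n μ w fun i => X i k) (bgMatrix θ n p) := fun k =>
      (hcol k).integrable_comp_of_integrable hZint
    rw [integral_const_mul, integral_finsetSum _ fun k _ => hcolint k]
    have : ∀ k : Fin p, ∫ X, colDeriv n μ w (fun i => X i k) ∂bgMatrix θ n p =
        ∫ x, colDeriv n μ w x ∂bgVec θ n := fun k => by
      rw [← (hcol k).map_eq, integral_map (hcol k).measurable.aemeasurable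
        hZ.aestronglyMeasurable]
    simp only [this, Finset.sum_const, Finset.card_univ, Fintype.card_fin, nsmul_eq_mul]
    field_simp
  have hc : ((∑ i, (qdir n w i ^ 2).toNNReal : ℝ≥0) : ℝ) ≤ (2 * √n) ^ 2 := by
    push_cast
    simp only [Real.coe_toNNReal _ (sq_nonneg _)]
    rw [sum_qdir_sq hw0 hw1, mul_pow, Real.sq_sqrt hn.le]
    refine inv_le_of_inv_le₀ (by positivity) ?_
    norm_num at hq ⊢
    linarith
  have hR : 0 < 2 * √(n : ℝ) := by have := Real.sqrt_pos.2 hn; positivity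
  have h := measure_pi_abs_sum_ge_le_of_abs_le p hY hZ hZY hR hc ht
  have hset : {X : Fin n → Fin p → ℝ | t ≤ |⟪w, gradg n p μ (Matrix.of X) w⟫ / ‖w‖ -
        ∫ X', ⟪w, gradg n p μ (Matrix.of X') w⟫ / ‖w‖ ∂bgMatrix θ n p|} =
      (fun X k i => X i k) ⁻¹' {X : Fin p → Fin n → ℝ | p * t ≤
        |∑ k, (colDeriv n μ w (X k) - ∫ x, colDeriv n μ w x ∂bgVec θ n)|} := by
    ext X
    rw [Set.mem_preimage, Set.mem_ofPred_eq, Set.mem_ofPred_eq, hmean,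
      inner_gradg_div_norm hμ _ hw0 hw1]
    have : (p : ℝ)⁻¹ * ∑ k, colDeriv n μ w (fun i => Matrix.of X i k) -
        ∫ x, colDeriv n μ w x ∂bgVec θ n =
        (p : ℝ)⁻¹ * ∑ k, (colDeriv n μ w (fun i => X i k) -
          ∫ x, colDeriv n μ w x ∂bgVec θ n) := by
      simp only [Matrix.of_apply, Finset.sum_sub_distrib, Finset.sum_const, Finset.card_univ,
        Fintype.card_fin, nsmul_eq_mul]
      field_simp
    rw [this, abs_mul, abs_of_pos (inv_pos.2 hp'), ← div_eq_inv_mul, le_div_iff₀ hp', mul_comm]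
  have hmeas : MeasurableSet {X : Fin p → Fin n → ℝ | p * t ≤
      |∑ k, (colDeriv n μ w (X k) - ∫ x, colDeriv n μ w x ∂bgVec θ n)|} :=
    measurableSet_le measurable_const (by fun_prop)
  rw [hset, bgMatrix, hswap.measure_preimage hmeas.nullMeasurableSet]
  refine h.trans_eq ?_
  have hden : 2 * (2 * √(n : ℝ)) ^ 2 + 2 * (2 * √n) * t = 8 * n + 4 * √n * t := by
    rw [mul_pow, Real.sq_sqrt hn.le]; ring
  rw [hden]

end
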